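/- Let Φ_i be the i-th Dirichlet eigenfunction of A = −div(w∇·) with eigenvalue λ_i, and let Ω_j be a nodal domain of Φ_i (a connected component of {Φ_i ≠ 0}). Then the restriction of Φ_i to Ω_j, extended by zero, lies in H₀¹(Ω_j; w), and λ_i(Ω) = λ₁(Ω_j), the first Dirichlet eigenvalue of A on Ω_j. -/

import Mathlib

open MeasureTheory
open scoped RealInnerProductSpace

/-- Membership in the Dirichlet space `H₀¹(Ω;w)`-type class. -/
def H01Mem {N : ℕ} (Ω : Set (EuclideanSpace ℝ (Fin N)))
    (w u : EuclideanSpace ℝ (Fin N) → ℝ) : Prop :=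
  ContinuousOn u (closure Ω) ∧ (∀ x ∈ frontier Ω, u x = 0) ∧
  DifferentiableOn ℝ u Ω ∧
  MeasureTheory.IntegrableOn (fun x => u x ^ 2) Ω ∧
  MeasureTheory.IntegrableOn (fun x => ‖gradient u x‖ ^ 2 * w x) Ω

/-- Weak Dirichlet eigenfunction of `-div(w∇·)` on `Ω` with eigenvalue `l`. -/
def IsWeakEigenfun {N : ℕ} (Ω : Set (EuclideanSpace ℝ (Fin N)))
    (w u : EuclideanSpace ℝ (Fin N) → ℝ) (l : ℝ) : Prop :=
  H01Mem Ω w u ∧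
  ∀ ψ : EuclideanSpace ℝ (Fin N) → ℝ,
    ContDiff ℝ (⊤ : ℕ∞) ψ → HasCompactSupport ψ → tsupport ψ ⊆ Ω →
    ∫ x in Ω, ⟪gradient u x, gradient ψ x⟫ * w x = l * ∫ x in Ω, u x * ψ x

/-- The `n`-th Dirichlet eigenvalue (1-indexed) of `-div(w∇·)` on `Ω` via the
Courant–Fischer min-max principle over test-function subspaces. -/
noncomputable def dirEigen {N : ℕ} (Ω : Set (EuclideanSpace ℝ (Fin N)))
    (w : EuclideanSpace ℝ (Fin N) → ℝ) (n : ℕ) : ℝ :=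
  sInf { r : ℝ | ∃ g : Fin n → EuclideanSpace ℝ (Fin N) → ℝ,
    (∀ j, ContDiff ℝ (⊤ : ℕ∞) (g j) ∧ HasCompactSupport (g j) ∧ tsupport (g j) ⊆ Ω) ∧
    ∀ c : Fin n → ℝ, c ≠ 0 →
      0 < ∫ x in Ω, (∑ j, c j * g j x) ^ 2 ∧
      ∫ x in Ω, ‖gradient (fun y => ∑ j, c j * g j y) x‖ ^ 2 * w x ≤
        r * ∫ x in Ω, (∑ j, c j * g j x) ^ 2 }


theorem aux_translate {N : ℕ} {F : Type*} [NormedAddCommGroup F]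
    (G : EuclideanSpace ℝ (Fin N) → F) (hG : MemLp G 2 volume) (δ : ℝ) (hδ : 0 < δ) :
    ∃ r > 0, ∀ t : EuclideanSpace ℝ (Fin N), ‖t‖ < r →
      ∫⁻ x, ‖G (x - t) - G x‖ₑ ^ 2 ≤ ENNReal.ofReal δ := by
  have : Fact ((2 : ENNReal) ≠ ⊤) := ⟨by norm_num⟩
  have hc : Continuous (fun t : EuclideanSpace ℝ (Fin N) => DomAddAct.mk (-t) +ᵥ hG.toLp G) := by
    have h1 : Continuous (fun t : EuclideanSpace ℝ (Fin N) => DomAddAct.mk (-t)) :=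
      DomAddAct.continuous_mk.comp continuous_neg
    exact h1.vadd continuous_const
  have h0 := (Metric.continuous_iff.1 hc) 0 (Real.sqrt δ) (Real.sqrt_pos.2 hδ)
  obtain ⟨r, hr, h⟩ := h0
  refine ⟨r, hr, fun t ht => ?_⟩
  have h2 := h t (by simpa using ht)
  have h3 : (DomAddAct.mk (-(0 : EuclideanSpace ℝ (Fin N))) +ᵥ hG.toLp G) = hG.toLp G := by
    simp
  rw [h3] at h2
  have hmp : MeasurePreserving (fun x : EuclideanSpace ℝ (Fin N) => -t +ᵥ x) volume volume :=
    measurePreserving_vadd (-t) volume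
  have h4 : (DomAddAct.mk (-t) +ᵥ hG.toLp G) = (hG.comp_measurePreserving hmp).toLp _ := by
    exact DomAddAct.mk_vadd_toLp _ _
  rw [h4, dist_edist, Lp.edist_toLp_toLp] at h2
  have h5 : eLpNorm ((G ∘ fun x : EuclideanSpace ℝ (Fin N) => -t +ᵥ x) - G) 2 volume
      ≤ ENNReal.ofReal (Real.sqrt δ) := by
    have hfin : eLpNorm ((G ∘ fun x : EuclideanSpace ℝ (Fin N) => -t +ᵥ x) - G) 2 volume ≠ ⊤ :=
      ((hG.comp_measurePreserving hmp).sub hG).2.ne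
    rw [← ENNReal.ofReal_toReal hfin]
    exact ENNReal.ofReal_le_ofReal h2.le
  have h6 := pow_le_pow_left₀ (zero_le) h5 2
  rw [eLpNorm_eq_lintegral_rpow_enorm_toReal (by norm_num) (by norm_num)] at h6
  rw [← ENNReal.ofReal_pow (Real.sqrt_nonneg _), Real.sq_sqrt hδ.le] at h6
  refine le_trans (le_of_eq ?_) h6
  rw [← ENNReal.rpow_natCast, ← ENNReal.rpow_mul]
  norm_num
  congr 1
  ext x
  rw [neg_add_eq_sub]

theorem aux_jensen {α : Type*} [MeasurableSpace α] (μ : Measure α) [IsProbabilityMeasure μ]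
    {f : α → ENNReal} (hf : AEMeasurable f μ) :
    (∫⁻ x, f x ∂μ) ^ 2 ≤ ∫⁻ x, f x ^ 2 ∂μ := by
  have := ENNReal.lintegral_mul_le_Lp_mul_Lq μ Real.HolderConjugate.two_two hf
    (aemeasurable_const (b := (1 : ENNReal)))
  have h6 := pow_le_pow_left₀ (zero_le) this 2
  rw [mul_pow, ← ENNReal.rpow_natCast (_ ^ (1 / 2 : ℝ)), ← ENNReal.rpow_mul] at h6
  simpa using h6

theorem aux_mollify {N : ℕ} {F : Type*} [NormedAddCommGroup F] [NormedSpace ℝ F]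
    [CompleteSpace F]
    (G : EuclideanSpace ℝ (Fin N) → F) (hGm : StronglyMeasurable G)
    (hG : MemLp G 2 volume) (δ : ℝ) (hδ : 0 < δ) :
    ∃ r > 0, ∀ ρ : EuclideanSpace ℝ (Fin N) → ℝ, Continuous ρ → (∀ x, 0 ≤ ρ x) →
      HasCompactSupport ρ → Function.support ρ ⊆ Metric.ball 0 r → ∫ x, ρ x = 1 →
      ∫⁻ x, ‖(∫ t, ρ t • G (x - t)) - G x‖ₑ ^ 2 ≤ ENNReal.ofReal δ := by
  obtain ⟨r, hr, h⟩ := aux_translate G hG δ hδ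
  refine ⟨r, hr, fun ρ hρ hρ0 hρc hρs hρ1 => ?_⟩
  set μ : Measure (EuclideanSpace ℝ (Fin N)) :=
    volume.withDensity (fun t => ENNReal.ofReal (ρ t)) with hμ
  have hρm : Measurable (fun t => ENNReal.ofReal (ρ t)) := hρ.measurable.ennreal_ofReal
  have hρi : Integrable ρ := hρ.integrable_of_hasCompactSupport hρc
  have : IsProbabilityMeasure μ := by
    refine ⟨?_⟩
    rw [hμ, withDensity_apply _ MeasurableSet.univ, Measure.restrict_univ,
      ← ofReal_integral_eq_lintegral_ofReal hρi (Filter.Eventually.of_forall hρ0), hρ1]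
    simp
  have hmeas : Measurable (fun p : EuclideanSpace ℝ (Fin N) × EuclideanSpace ℝ (Fin N) =>
      ‖G (p.1 - p.2) - G p.1‖ₑ ^ 2) := by
    have : StronglyMeasurable
      (fun p : EuclideanSpace ℝ (Fin N) × EuclideanSpace ℝ (Fin N) => G (p.1 - p.2) - G p.1) :=
      (hGm.comp_measurable (measurable_fst.sub measurable_snd)).sub
        (hGm.comp_measurable measurable_fst)
    exact this.enorm.pow_const 2
  have hpt : ∀ x, ‖(∫ t, ρ t • G (x - t)) - G x‖ₑ ^ 2 ≤ ∫⁻ t, ‖G (x - t) - G x‖ₑ ^ 2 ∂μ := by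
    intro x
    have hloc : LocallyIntegrable (fun t => G (x - t)) :=
      (hG.comp_measurePreserving (Measure.measurePreserving_sub_left volume x)).locallyIntegrable
        (by norm_num)
    have hi1 : Integrable (fun t => ρ t • G (x - t)) :=
      hloc.integrable_smul_left_of_hasCompactSupport hρ hρc
    have hi2 : Integrable (fun t => ρ t • G x) := hρi.smul_const _
    have e1 : (∫ t, ρ t • G (x - t)) - G x = ∫ t, ρ t • (G (x - t) - G x) := by
      simp_rw [smul_sub]
      rw [integral_sub hi1 hi2, integral_smul_const, hρ1, one_smul]
    have hm1 : StronglyMeasurable (fun t => G (x - t) - G x) :=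
      (hGm.comp_measurable (measurable_const.sub measurable_id)).sub stronglyMeasurable_const
    refine le_trans ?_ (aux_jensen μ hm1.enorm.aemeasurable)
    refine pow_le_pow_left₀ zero_le ?_ 2
    rw [e1]
    refine (enorm_integral_le_lintegral_enorm _).trans (le_of_eq ?_)
    rw [hμ, lintegral_withDensity_eq_lintegral_mul _ hρm hm1.enorm]
    refine lintegral_congr fun t => ?_
    simp [enorm_smul, Real.enorm_eq_ofReal (hρ0 t)]
  calc ∫⁻ x, ‖(∫ t, ρ t • G (x - t)) - G x‖ₑ ^ 2
      ≤ ∫⁻ x, ∫⁻ t, ‖G (x - t) - G x‖ₑ ^ 2 ∂μ := lintegral_mono hpt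
    _ = ∫⁻ t, (∫⁻ x, ‖G (x - t) - G x‖ₑ ^ 2) ∂μ := by
        exact lintegral_lintegral_swap hmeas.aemeasurable
    _ = ∫⁻ t, ENNReal.ofReal (ρ t) * ∫⁻ x, ‖G (x - t) - G x‖ₑ ^ 2 := by
        rw [hμ, lintegral_withDensity_eq_lintegral_mul _ hρm]
        · rfl
        · exact (hmeas.comp measurable_swap).lintegral_prod_right'
    _ ≤ ∫⁻ t, ENNReal.ofReal (ρ t) * ENNReal.ofReal δ := by
        refine lintegral_mono fun t => ?_
        by_cases ht : ρ t = 0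
        · simp [ht]
        · exact mul_le_mul_right (h t (by simpa using hρs ht)) _
    _ = ENNReal.ofReal δ := by
        rw [lintegral_mul_const _ hρm, ← ofReal_integral_eq_lintegral_ofReal hρi
          (Filter.Eventually.of_forall hρ0), hρ1]
        simp

theorem aux_grad_def {N : ℕ} (f : EuclideanSpace ℝ (Fin N) → ℝ) (x : EuclideanSpace ℝ (Fin N)) :
    gradient f x = (InnerProductSpace.toDual ℝ _).symm (fderiv ℝ f x) := rfl

theorem aux_grad_inner {N : ℕ} (f : EuclideanSpace ℝ (Fin N) → ℝ)
    (x e : EuclideanSpace ℝ (Fin N)) :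
    ⟪gradient f x, e⟫ = fderiv ℝ f x e := by
  rw [aux_grad_def, InnerProductSpace.toDual_symm_apply]

theorem aux_grad_meas {N : ℕ} (f : EuclideanSpace ℝ (Fin N) → ℝ) :
    StronglyMeasurable (gradient f) := by
  have h : Measurable (gradient f) :=
    (InnerProductSpace.toDual ℝ (EuclideanSpace ℝ (Fin N))).symm.continuous.measurable.comp
      (measurable_fderiv ℝ f)
  exact h.stronglyMeasurable

theorem aux_grad_zero {N : ℕ} {f : EuclideanSpace ℝ (Fin N) → ℝ}
    {x : EuclideanSpace ℝ (Fin N)} (hx : x ∉ tsupport f) : gradient f x = 0 := by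
  have : fderiv ℝ f x = 0 := by
    by_contra h
    exact hx (support_fderiv_subset ℝ h)
  rw [aux_grad_def, this, map_zero]

theorem aux_grad_smooth {N : ℕ} {f : EuclideanSpace ℝ (Fin N) → ℝ}
    (hf : ContDiff ℝ (⊤ : ℕ∞) f) (hc : HasCompactSupport f) :
    Continuous (gradient f) ∧ HasCompactSupport (gradient f) := by
  constructor
  · exact (InnerProductSpace.toDual ℝ (EuclideanSpace ℝ (Fin N))).symm.continuous.comp
      (hf.continuous_fderiv (by simp))
  · refine HasCompactSupport.intro hc fun x hx => aux_grad_zero hx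

theorem aux_int_sq {α F : Type*} [MeasurableSpace α] [NormedAddCommGroup F] {μ : Measure α}
    {H : α → F} (hm : AEStronglyMeasurable H μ) {δ : ℝ} (hδ : 0 ≤ δ)
    (h : ∫⁻ x, ‖H x‖ₑ ^ 2 ∂μ ≤ ENNReal.ofReal δ) : ∫ x, ‖H x‖ ^ 2 ∂μ ≤ δ := by
  rw [integral_eq_lintegral_of_nonneg_ae (f := fun x => ‖H x‖ ^ 2) (Filter.Eventually.of_forall fun x => by positivity)
    (hm.norm.pow 2)]
  refine ENNReal.toReal_le_of_le_ofReal hδ (le_trans (le_of_eq ?_) h)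
  refine lintegral_congr fun x => ?_
  rw [ENNReal.ofReal_pow (norm_nonneg _), ofReal_norm]

theorem aux_grad_conv {N : ℕ} (ρ u : EuclideanSpace ℝ (Fin N) → ℝ)
    (hρ : ContDiff ℝ (⊤ : ℕ∞) ρ) (hρc : HasCompactSupport ρ)
    (hu : Differentiable ℝ u) (hg : MemLp (gradient u) 2 volume)
    (x : EuclideanSpace ℝ (Fin N)) :
    gradient (convolution ρ u (ContinuousLinearMap.lsmul ℝ ℝ) volume) x
      = ∫ t, ρ t • gradient u (x - t) := by
  have hD := hρc.hasFDerivAt_convolution_left (ContinuousLinearMap.lsmul ℝ ℝ)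
    (hρ.of_le (by simp)) (hu.continuous.locallyIntegrable (μ := volume)) x
  have hρ1 : Continuous (fderiv ℝ ρ) := hρ.continuous_fderiv (by simp)
  have hshift : Continuous (fun t => u (x - t)) :=
    hu.continuous.comp (continuous_const.sub continuous_id)
  have hloc : LocallyIntegrable (fun t => gradient u (x - t)) :=
      (hg.comp_measurePreserving (Measure.measurePreserving_sub_left volume x)).locallyIntegrable
        (by norm_num)
  have hi : Integrable (fun t => ρ t • gradient u (x - t)) :=
      hloc.integrable_smul_left_of_hasCompactSupport hρ.continuous hρc
  have hdiff : Differentiable ℝ (fun t => u (x - t)) :=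
    hu.comp ((differentiable_const x).sub differentiable_id)
  have hfd : ∀ t e, fderiv ℝ (fun t => u (x - t)) t e = - fderiv ℝ u (x - t) e := by
    intro t e
    have h1 : HasFDerivAt (fun t => x - t) (-(ContinuousLinearMap.id ℝ (EuclideanSpace ℝ (Fin N)))) t :=
      (hasFDerivAt_id t).const_sub x
    have := ((hu (x - t)).hasFDerivAt.comp t h1).fderiv
    have h2 : (u ∘ fun t => x - t) = fun t => u (x - t) := rfl
    rw [h2] at this
    rw [this]; simp
  refine ext_inner_right ℝ fun e => ?_
  rw [aux_grad_inner, hD.fderiv]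
  have hip : ∫ t, ρ t * fderiv ℝ (fun t => u (x - t)) t e
      = - ∫ t, fderiv ℝ ρ t e * u (x - t) := by
    refine integral_mul_fderiv_eq_neg_fderiv_mul_of_integrable ?_ ?_ ?_ ?_ ?_
    · refine Continuous.integrable_of_hasCompactSupport ?_ ?_
      · exact (hρ1.clm_apply continuous_const).mul hshift
      · refine HasCompactSupport.mul_right ?_
        exact hρc.fderiv_apply ℝ e
    · have h3 : (fun t => ρ t * fderiv ℝ (fun t => u (x - t)) t e)
          = fun t => - ⟪ρ t • gradient u (x - t), e⟫ := by
        ext t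
        rw [hfd, inner_smul_left, aux_grad_inner]; simp
      rw [h3]
      exact (hi.inner_const e).neg
    · exact Continuous.integrable_of_hasCompactSupport (hρ.continuous.mul hshift) hρc.mul_right
    · exact fun t _ => hρ.differentiable (by simp) t
    · exact fun t _ => hdiff t
  have hL : (convolution (fderiv ℝ ρ) u
      ((ContinuousLinearMap.lsmul ℝ ℝ).precompL (EuclideanSpace ℝ (Fin N))) volume x) e
      = ∫ t, fderiv ℝ ρ t e * u (x - t) := by
    rw [convolution_def, ContinuousLinearMap.integral_apply]
    · rfl
    · have : Continuous (fun t => ((ContinuousLinearMap.lsmul ℝ ℝ).precompL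
          (EuclideanSpace ℝ (Fin N))) (fderiv ℝ ρ t) (u (x - t))) :=
        (((ContinuousLinearMap.lsmul ℝ ℝ).precompL
          (EuclideanSpace ℝ (Fin N))).continuous.comp hρ1).clm_apply hshift
      refine this.integrable_of_hasCompactSupport ?_
      refine HasCompactSupport.intro (hρc.fderiv ℝ) fun t ht => ?_
      rw [image_eq_zero_of_notMem_tsupport ht]; simp
  rw [hL]
  have hR : ⟪∫ t, ρ t • gradient u (x - t), e⟫ = ∫ t, ⟪ρ t • gradient u (x - t), e⟫ := by
    rw [real_inner_comm, ← integral_inner hi e]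
    exact integral_congr_ae (Filter.Eventually.of_forall fun t => real_inner_comm _ _)
  rw [hR]
  have h4 : ∫ t, ⟪ρ t • gradient u (x - t), e⟫
      = - ∫ t, ρ t * fderiv ℝ (fun t => u (x - t)) t e := by
    rw [← integral_neg]
    refine integral_congr_ae (Filter.Eventually.of_forall fun t => ?_)
    simp only [hfd, inner_smul_left, aux_grad_inner]; simp
  rw [h4, hip, neg_neg]

theorem aux_approx {N : ℕ} (U : Set (EuclideanSpace ℝ (Fin N))) (hU : IsOpen U)
    (w : EuclideanSpace ℝ (Fin N) → ℝ) (hw : ContinuousOn w U) (hw0 : ∀ x ∈ U, 0 < w x)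
    (u : EuclideanSpace ℝ (Fin N) → ℝ) (hu : Differentiable ℝ u) (huc : HasCompactSupport u)
    (hus : tsupport u ⊆ U) (hg : MemLp (gradient u) 2 volume) (δ : ℝ) (hδ : 0 < δ) :
    ∃ v : EuclideanSpace ℝ (Fin N) → ℝ, ContDiff ℝ (⊤ : ℕ∞) v ∧ HasCompactSupport v ∧
      tsupport v ⊆ U ∧ ∫ x in U, ‖gradient v x - gradient u x‖ ^ 2 * w x < δ ∧
      ∫ x in U, (v x - u x) ^ 2 < δ := by
  obtain ⟨r0, hr0, hK'U⟩ := huc.isCompact.exists_cthickening_subset_open hU hus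
  set K' := Metric.cthickening r0 (tsupport u) with hK'
  have hK'c : IsCompact K' := huc.isCompact.cthickening
  obtain ⟨M, hM⟩ := hK'c.exists_bound_of_continuousOn (hw.mono hK'U)
  set M' := |M| + 1 with hM'
  have hM'pos : 0 < M' := by positivity
  have hwM : ∀ x ∈ K', w x ≤ M' := fun x hx => by
    have h1 := hM x hx
    rw [Real.norm_eq_abs] at h1
    have := le_abs_self (w x)
    have := le_abs_self M
    linarith
  have huL : MemLp u 2 volume := hu.continuous.memLp_of_hasCompactSupport huc
  have hd1 : 0 < δ / (2 * M') := by positivity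
  obtain ⟨r1, hr1, h1⟩ := aux_mollify (gradient u) (aux_grad_meas u) hg (δ / (2 * M')) hd1
  obtain ⟨r2, hr2, h2⟩ := aux_mollify u hu.continuous.stronglyMeasurable huL (δ / 2) (by positivity)
  obtain ⟨r, hr, hrr0, hrr1, hrr2⟩ : ∃ r > 0, r ≤ r0 ∧ r ≤ r1 ∧ r ≤ r2 :=
    ⟨min r0 (min r1 r2), by positivity, min_le_left _ _,
      (min_le_right _ _).trans (min_le_left _ _), (min_le_right _ _).trans (min_le_right _ _)⟩
  let φ : ContDiffBump (0 : EuclideanSpace ℝ (Fin N)) := ⟨r / 2, r, by positivity, by linarith⟩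
  set ρ := φ.normed volume with hρdef
  have hρ : ContDiff ℝ (⊤ : ℕ∞) ρ := φ.contDiff_normed
  have hρc : HasCompactSupport ρ := φ.hasCompactSupport_normed
  have hρ0 : ∀ x, 0 ≤ ρ x := φ.nonneg_normed
  have hρs : Function.support ρ = Metric.ball 0 r := φ.support_normed_eq
  have hρ1 : ∫ x, ρ x = 1 := φ.integral_normed
  set v := convolution ρ u (ContinuousLinearMap.lsmul ℝ ℝ) volume with hv
  have hvsupp : tsupport v ⊆ K' := by
    refine closure_minimal ?_ hK'c.isClosed
    refine (support_convolution_subset _).trans ?_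
    rw [hρs]
    rintro _ ⟨a, ha, b, hb, rfl⟩
    refine Metric.mem_cthickening_of_dist_le _ b _ _ (subset_tsupport _ hb) ?_
    have : ‖a‖ < r := by simpa using ha
    simp only [dist_eq_norm, add_sub_cancel_right]
    linarith
  have hvc : HasCompactSupport v := hK'c.of_isClosed_subset (isClosed_tsupport _) hvsupp
  have hvs : ContDiff ℝ (⊤ : ℕ∞) v :=
    hρc.contDiff_convolution_left _ hρ hu.continuous.locallyIntegrable
  have hvg : ∀ x, gradient v x = ∫ t, ρ t • gradient u (x - t) :=
    aux_grad_conv ρ u hρ hρc hu hg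
  have hvv : ∀ x, v x = ∫ t, ρ t • u (x - t) := fun x => rfl
  have b1 := h1 ρ hρ.continuous hρ0 hρc (hρs ▸ Metric.ball_subset_ball hrr1) hρ1
  have b2 := h2 ρ hρ.continuous hρ0 hρc (hρs ▸ Metric.ball_subset_ball hrr2) hρ1
  simp_rw [← hvg] at b1
  simp_rw [← hvv] at b2
  have hgv := aux_grad_smooth hvs hvc
  have hgvL : MemLp (gradient v) 2 volume := hgv.1.memLp_of_hasCompactSupport hgv.2
  have hvL : MemLp v 2 volume := hvs.continuous.memLp_of_hasCompactSupport hvc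
  have c1 := aux_int_sq (hgvL.sub hg).1 hd1.le b1
  have c2 := aux_int_sq (hvL.sub huL).1 (by positivity) b2
  have i1 : Integrable (fun x => ‖gradient v x - gradient u x‖ ^ 2) :=
    (hgvL.sub hg).integrable_norm_pow (by norm_num)
  have i2 : Integrable (fun x => ‖v x - u x‖ ^ 2) :=
    (hvL.sub huL).integrable_norm_pow (by norm_num)
  refine ⟨v, hvs, hvc, hvsupp.trans hK'U, ?_, ?_⟩
  · calc ∫ x in U, ‖gradient v x - gradient u x‖ ^ 2 * w x
        ≤ ∫ x in U, M' * ‖gradient v x - gradient u x‖ ^ 2 := by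
          refine integral_mono_of_nonneg ?_ (i1.const_mul _).integrableOn ?_
          · refine (ae_restrict_iff' hU.measurableSet).2 (Filter.Eventually.of_forall fun x hx => ?_)
            have := hw0 x hx
            simp only [Pi.zero_apply]; positivity
          · refine (ae_restrict_iff' hU.measurableSet).2 (Filter.Eventually.of_forall fun x hx => ?_)
            simp only
            by_cases hxK : x ∈ K'
            · rw [mul_comm]
              exact mul_le_mul_of_nonneg_right (hwM x hxK) (by positivity)
            · rw [aux_grad_zero (fun h => hxK (hvsupp h)),
                aux_grad_zero (fun h => hxK (Metric.self_subset_cthickening _ h))]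
              simp
      _ ≤ ∫ x, M' * ‖gradient v x - gradient u x‖ ^ 2 :=
          setIntegral_le_integral (i1.const_mul _)
            (Filter.Eventually.of_forall fun x => by simp only [Pi.zero_apply]; positivity)
      _ = M' * ∫ x, ‖gradient v x - gradient u x‖ ^ 2 := integral_const_mul _ _
      _ ≤ M' * (δ / (2 * M')) := mul_le_mul_of_nonneg_left c1 hM'pos.le
      _ = δ / 2 := by field_simp
      _ < δ := by linarith
  · calc ∫ x in U, (v x - u x) ^ 2 = ∫ x in U, ‖v x - u x‖ ^ 2 := by simp
      _ ≤ ∫ x, ‖v x - u x‖ ^ 2 := setIntegral_le_integral i2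
            (Filter.Eventually.of_forall fun x => by simp only [Pi.zero_apply]; positivity)
      _ ≤ δ / 2 := c2
      _ < δ := by linarith

theorem aux_L2 {α H : Type*} [MeasurableSpace α] [NormedAddCommGroup H] [InnerProductSpace ℝ H]
    {μ : Measure α} {F : ℕ → α → H} {f G : α → H} (hF : ∀ n, MemLp (F n) 2 μ)
    (hf : MemLp f 2 μ) (hG : MemLp G 2 μ)
    (h : Filter.Tendsto (fun n => ∫ x, ‖F n x - f x‖ ^ 2 ∂μ) Filter.atTop (nhds 0)) :
    Filter.Tendsto (fun n => ∫ x, ⟪G x, F n x⟫ ∂μ) Filter.atTop (nhds (∫ x, ⟪G x, f x⟫ ∂μ)) ∧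
    Filter.Tendsto (fun n => ∫ x, ‖F n x‖ ^ 2 ∂μ) Filter.atTop (nhds (∫ x, ‖f x‖ ^ 2 ∂μ)) := by
  have hin : ∀ {a b : α → H} (ha : MemLp a 2 μ) (hb : MemLp b 2 μ),
      ⟪ha.toLp a, hb.toLp b⟫ = ∫ x, ⟪a x, b x⟫ ∂μ := by
    intro a b ha hb
    rw [L2.inner_def]
    refine integral_congr_ae ?_
    filter_upwards [ha.coeFn_toLp, hb.coeFn_toLp] with x h1 h2
    rw [h1, h2]
  have hno : ∀ {a : α → H} (ha : MemLp a 2 μ), ‖ha.toLp a‖ ^ 2 = ∫ x, ‖a x‖ ^ 2 ∂μ := by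
    intro a ha
    rw [← real_inner_self_eq_norm_sq, hin ha ha]
    simp_rw [real_inner_self_eq_norm_sq]
  have ht : Filter.Tendsto (fun n => (hF n).toLp (F n)) Filter.atTop (nhds (hf.toLp f)) := by
    rw [tendsto_iff_norm_sub_tendsto_zero]
    have h1 : ∀ n, ‖(hF n).toLp (F n) - hf.toLp f‖
        = Real.sqrt (∫ x, ‖F n x - f x‖ ^ 2 ∂μ) := by
      intro n
      rw [← MemLp.toLp_sub, ← Real.sqrt_sq (norm_nonneg _), hno]
      rfl
    simp_rw [h1]
    simpa using h.sqrt
  constructor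
  · have := (tendsto_const_nhds (x := hG.toLp G)).inner (𝕜 := ℝ) ht
    rw [hin] at this
    refine this.congr fun n => hin _ _
  · have := ht.norm.pow 2
    rw [hno] at this
    refine this.congr fun n => hno _

theorem aux_wL2 {N : ℕ} {U K : Set (EuclideanSpace ℝ (Fin N))} (hU : IsOpen U)
    {w : EuclideanSpace ℝ (Fin N) → ℝ} (hw : ContinuousOn w U)
    {g : EuclideanSpace ℝ (Fin N) → EuclideanSpace ℝ (Fin N)} (hg : MemLp g 2 volume)
    (hK : IsCompact K) (hKU : K ⊆ U) (hgK : ∀ x, x ∉ K → g x = 0) :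
    MemLp (fun x => Real.sqrt (w x) • g x) 2 (volume.restrict U) := by
  obtain ⟨M, hM⟩ := hK.exists_bound_of_continuousOn (hw.mono hKU).sqrt
  have hwm : AEStronglyMeasurable (fun x => Real.sqrt (w x)) (volume.restrict U) :=
    hw.sqrt.aestronglyMeasurable hU.measurableSet
  refine MemLp.of_le_mul (c := |M|) (hg.restrict U) (hwm.smul hg.1.restrict) ?_
  refine Filter.Eventually.of_forall fun x => ?_
  by_cases hx : x ∈ K
  · rw [norm_smul]
    exact mul_le_mul_of_nonneg_right ((hM x hx).trans (le_abs_self M)) (norm_nonneg _)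
  · rw [hgK x hx]; simp

theorem aux_sq {N : ℕ} {U : Set (EuclideanSpace ℝ (Fin N))} (hU : IsOpen U)
    {w : EuclideanSpace ℝ (Fin N) → ℝ} (hw0 : ∀ x ∈ U, 0 < w x)
    (g : EuclideanSpace ℝ (Fin N) → EuclideanSpace ℝ (Fin N)) :
    ∫ x in U, ‖Real.sqrt (w x) • g x‖ ^ 2 = ∫ x in U, ‖g x‖ ^ 2 * w x := by
  refine setIntegral_congr_fun hU.measurableSet fun x hx => ?_
  simp only [norm_smul, mul_pow, Real.norm_eq_abs, sq_abs, Real.sq_sqrt (hw0 x hx).le]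
  ring

theorem aux_in {N : ℕ} {U : Set (EuclideanSpace ℝ (Fin N))} (hU : IsOpen U)
    {w : EuclideanSpace ℝ (Fin N) → ℝ} (hw0 : ∀ x ∈ U, 0 < w x)
    (f g : EuclideanSpace ℝ (Fin N) → EuclideanSpace ℝ (Fin N)) :
    ∫ x in U, ⟪Real.sqrt (w x) • f x, Real.sqrt (w x) • g x⟫ = ∫ x in U, ⟪f x, g x⟫ * w x := by
  refine setIntegral_congr_fun hU.measurableSet fun x hx => ?_
  simp only [real_inner_smul_left, real_inner_smul_right]
  rw [← mul_assoc, Real.mul_self_sqrt (hw0 x hx).le, mul_comm]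

theorem aux_wmem {N : ℕ} {U : Set (EuclideanSpace ℝ (Fin N))} (hU : IsOpen U)
    {w : EuclideanSpace ℝ (Fin N) → ℝ} (hw : ContinuousOn w U) (hw0 : ∀ x ∈ U, 0 < w x)
    (f : EuclideanSpace ℝ (Fin N) → ℝ)
    (hi : IntegrableOn (fun x => ‖gradient f x‖ ^ 2 * w x) U) :
    MemLp (fun x => Real.sqrt (w x) • gradient f x) 2 (volume.restrict U) := by
  have hwm : AEStronglyMeasurable (fun x => Real.sqrt (w x)) (volume.restrict U) :=
    hw.sqrt.aestronglyMeasurable hU.measurableSet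
  refine (memLp_two_iff_integrable_sq_norm (f := fun x => Real.sqrt (w x) • gradient f x)
    (hwm.smul (aux_grad_meas f).aestronglyMeasurable)).2 ?_
  refine hi.congr_fun (fun x hx => ?_) hU.measurableSet
  simp only [norm_smul, mul_pow, Real.norm_eq_abs, sq_abs, Real.sq_sqrt (hw0 x hx).le]
  ring

/-- Extension of the weak formulation to compactly supported differentiable test functions with
square-integrable gradient. -/
theorem aux_weak {N : ℕ} {Ω : Set (EuclideanSpace ℝ (Fin N))} (hΩ : IsOpen Ω)
    {w : EuclideanSpace ℝ (Fin N) → ℝ} (hw : ContinuousOn w Ω) (hw0 : ∀ x ∈ Ω, 0 < w x)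
    {Φ : EuclideanSpace ℝ (Fin N) → ℝ} {l : ℝ} (heig : IsWeakEigenfun Ω w Φ l)
    (u : EuclideanSpace ℝ (Fin N) → ℝ) (hu : Differentiable ℝ u) (huc : HasCompactSupport u)
    (hus : tsupport u ⊆ Ω) (hg : MemLp (gradient u) 2 volume) :
    ∫ x in Ω, ⟪gradient Φ x, gradient u x⟫ * w x = l * ∫ x in Ω, Φ x * u x := by
  obtain ⟨⟨hΦc, hΦ0, hΦd, hΦ2, hΦg⟩, hweak⟩ := heig
  have hpos : ∀ n : ℕ, (0 : ℝ) < 1 / ((n : ℝ) + 1) := fun n => by positivity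
  choose v hvs hvc hvU hv1 hv2 using fun n : ℕ =>
    aux_approx Ω hΩ w hw hw0 u hu huc hus hg (1 / ((n : ℝ) + 1)) (hpos n)
  have hgv : ∀ n, MemLp (gradient (v n)) 2 volume := fun n =>
    (aux_grad_smooth (hvs n) (hvc n)).1.memLp_of_hasCompactSupport (aux_grad_smooth (hvs n) (hvc n)).2
  have huL : MemLp u 2 volume := hu.continuous.memLp_of_hasCompactSupport huc
  have hvL : ∀ n, MemLp (v n) 2 volume := fun n =>
    (hvs n).continuous.memLp_of_hasCompactSupport (hvc n)
  have hΦm : AEStronglyMeasurable Φ (volume.restrict Ω) :=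
    (hΦc.mono subset_closure).aestronglyMeasurable hΩ.measurableSet
  have hΦL : MemLp Φ 2 (volume.restrict Ω) := by
    rw [memLp_two_iff_integrable_sq hΦm]; exact hΦ2
  have hz := tendsto_one_div_add_atTop_nhds_zero_nat (𝕜 := ℝ)
  have T1 := (aux_L2 (μ := volume.restrict Ω)
    (F := fun n x => Real.sqrt (w x) • gradient (v n) x)
    (f := fun x => Real.sqrt (w x) • gradient u x)
    (G := fun x => Real.sqrt (w x) • gradient Φ x)
    (fun n => aux_wL2 hΩ hw (hgv n) (hvc n).isCompact (hvU n) fun x hx => aux_grad_zero hx)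
    (aux_wL2 hΩ hw hg huc.isCompact hus fun x hx => aux_grad_zero hx)
    (aux_wmem hΩ hw hw0 Φ hΦg) (by
      simp_rw [← smul_sub]
      refine squeeze_zero (fun n => integral_nonneg fun x => by positivity) (fun n => ?_) hz
      rw [aux_sq hΩ hw0 (fun x => gradient (v n) x - gradient u x)]
      exact (hv1 n).le)).1
  have T2 := (aux_L2 (μ := volume.restrict Ω) (F := v) (f := u) (G := Φ)
    (fun n => (hvL n).restrict Ω) (huL.restrict Ω) hΦL (by
      refine squeeze_zero (fun n => integral_nonneg fun x => by positivity) (fun n => ?_) hz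
      simp only [Real.norm_eq_abs, sq_abs]
      exact (hv2 n).le)).1
  simp_rw [aux_in hΩ hw0] at T1
  have hR : ∀ f : EuclideanSpace ℝ (Fin N) → ℝ, ∫ x in Ω, ⟪Φ x, f x⟫ = ∫ x in Ω, Φ x * f x := by
    intro f
    refine integral_congr_ae (Filter.Eventually.of_forall fun x => ?_)
    simp [mul_comm]
  simp_rw [hR] at T2
  have T3 := T2.const_mul l
  refine tendsto_nhds_unique T1 (T3.congr fun n => ?_)
  exact (hweak (v n) (hvs n) (hvc n) (hvU n)).symm

theorem aux_gradL2 {N : ℕ} {D K : Set (EuclideanSpace ℝ (Fin N))}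
    {w : EuclideanSpace ℝ (Fin N) → ℝ} (hw : ContinuousOn w D) (hw0 : ∀ x ∈ D, 0 < w x)
    {Φ : EuclideanSpace ℝ (Fin N) → ℝ}
    (hΦ : MemLp (fun x => Real.sqrt (w x) • gradient Φ x) 2 (volume.restrict D))
    (hK : IsCompact K) (hKD : K ⊆ D)
    (u : EuclideanSpace ℝ (Fin N) → ℝ) (hus : tsupport u ⊆ K) (A B : ℝ)
    (hb : ∀ x ∈ K, ‖gradient u x‖ ≤ A + B * ‖gradient Φ x‖) :
    MemLp (gradient u) 2 volume := by
  have hKm : MeasurableSet K := hK.measurableSet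
  obtain ⟨M, hM⟩ := hK.exists_bound_of_continuousOn
    (f := fun x => (Real.sqrt (w x))⁻¹) ((hw.mono hKD).sqrt.inv₀ fun x hx =>
      (Real.sqrt_pos.2 (hw0 x (hKD hx))).ne')
  have h1 : MemLp (gradient Φ) 2 (volume.restrict K) := by
    refine MemLp.of_le_mul (c := M) (hΦ.mono_measure (Measure.restrict_mono hKD le_rfl))
      (aux_grad_meas Φ).aestronglyMeasurable ?_
    refine (ae_restrict_iff' hKm).2 (Filter.Eventually.of_forall fun x hx => ?_)
    have hs := Real.sqrt_pos.2 (hw0 x (hKD hx))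
    have h2 := hM x hx
    rw [norm_inv, Real.norm_of_nonneg hs.le] at h2
    rw [norm_smul, Real.norm_of_nonneg hs.le, ← mul_assoc]
    have h3 : 1 ≤ M * Real.sqrt (w x) := by
      have := mul_le_mul_of_nonneg_right h2 hs.le
      rwa [inv_mul_cancel₀ hs.ne'] at this
    exact le_mul_of_one_le_left (norm_nonneg _) h3
  have : IsFiniteMeasure (volume.restrict K) := ⟨by
    rw [Measure.restrict_apply_univ]; exact hK.measure_lt_top⟩
  have h2 : MemLp (fun x => A + B * ‖gradient Φ x‖) 2 (volume.restrict K) :=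
    (memLp_const A).add (h1.norm.const_mul B)
  have h3 : MemLp (gradient u) 2 (volume.restrict K) := by
    refine h2.of_le (aux_grad_meas u).aestronglyMeasurable ?_
    refine (ae_restrict_iff' hKm).2 (Filter.Eventually.of_forall fun x hx => ?_)
    exact (hb x hx).trans (le_abs_self _)
  rw [← memLp_indicator_iff_restrict hKm] at h3
  have heq : gradient u = K.indicator (gradient u) := by
    refine funext fun x => ?_
    by_cases hx : x ∈ K
    · rw [Set.indicator_of_mem hx]
    · rw [Set.indicator_of_notMem hx, aux_grad_zero fun h => hx (hus h)]
  rw [heq]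
  exact h3

theorem aux_trunc : ∃ (h : ℝ → ℝ) (C : ℝ), Differentiable ℝ h ∧ (∀ t, |t| ≤ 1 → h t = 0) ∧
    (∀ t, 2 ≤ |t| → h t = t) ∧ (∀ t, |h t| ≤ |t|) ∧ (∀ t, |deriv h t| ≤ C) := by
  let b : ContDiffBump (0 : ℝ) := ⟨1, 2, by norm_num, by norm_num⟩
  have hb : ContDiff ℝ 1 (fun t : ℝ => b t) := b.contDiff
  have hh : ContDiff ℝ 1 (fun t : ℝ => t * (1 - b t)) := contDiff_id.mul (contDiff_const.sub hb)
  have h2 : ∀ t : ℝ, 2 ≤ |t| → t * (1 - b t) = t := by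
    intro t ht
    rw [b.zero_of_le_dist (by simpa using ht)]; simp
  obtain ⟨C, hC⟩ := (isCompact_Icc (a := (-2 : ℝ)) (b := 2)).exists_bound_of_continuousOn
    (hh.continuous_deriv le_rfl).continuousOn
  refine ⟨fun t => t * (1 - b t), max C 1, hh.differentiable one_ne_zero, ?_, h2, ?_, ?_⟩
  · intro t ht
    simp only
    rw [b.one_of_mem_closedBall (by simpa using ht)]; simp
  · intro t
    rw [abs_mul]
    refine mul_le_of_le_one_right (abs_nonneg _) ?_
    have h0 : 0 ≤ b t := b.nonneg
    have h1 : b t ≤ 1 := b.le_one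
    rw [abs_le]; constructor <;> linarith
  · intro t
    by_cases ht : |t| ≤ 2
    · exact (hC t (abs_le.1 ht)).trans (le_max_left _ _)
    · have hev : (fun t : ℝ => t * (1 - b t)) =ᶠ[nhds t] fun t => t := by
        have : ∀ᶠ s in nhds t, 2 < |s| :=
          continuous_abs.continuousAt.eventually (lt_mem_nhds (not_le.1 ht))
        filter_upwards [this] with s hs using h2 s hs.le
      rw [hev.deriv_eq]; simp

theorem aux_trunc_fun {N : ℕ} {D : Set (EuclideanSpace ℝ (Fin N))} (hD : IsOpen D)
    (hDb : Bornology.IsBounded D) {Φ : EuclideanSpace ℝ (Fin N) → ℝ}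
    (hΦc : ContinuousOn Φ (closure D)) (hΦd : DifferentiableOn ℝ Φ D)
    (hfr : ∀ x ∈ frontier D, Φ x = 0)
    {h : ℝ → ℝ} (hd : Differentiable ℝ h) (h0 : ∀ t, |t| ≤ 1 → h t = 0) {ε : ℝ} (hε : 0 < ε) :
    ∃ (u : EuclideanSpace ℝ (Fin N) → ℝ) (K : Set (EuclideanSpace ℝ (Fin N))),
      IsCompact K ∧ K ⊆ D ∧ tsupport u ⊆ K ∧ Differentiable ℝ u ∧
      (∀ x ∈ D, u x = ε * h (Φ x / ε)) ∧
      (∀ x ∈ D, gradient u x = deriv h (Φ x / ε) • gradient Φ x) := by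
  have hcl : IsClosed (closure D ∩ (fun x => |Φ x|) ⁻¹' Set.Ici ε) :=
    hΦc.abs.preimage_isClosed_of_isClosed isClosed_closure isClosed_Ici
  have hKc : IsCompact (closure D ∩ (fun x => |Φ x|) ⁻¹' Set.Ici ε) :=
    hDb.isCompact_closure.of_isClosed_subset hcl Set.inter_subset_left
  have hKD : closure D ∩ (fun x => |Φ x|) ⁻¹' Set.Ici ε ⊆ D := by
    rintro x ⟨hx, hx2⟩
    by_contra hxD
    have : x ∈ frontier D := by rw [hD.frontier_eq]; exact ⟨hx, hxD⟩
    have h3 : ε ≤ |Φ x| := hx2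
    rw [hfr x this, abs_zero] at h3
    linarith
  set K := closure D ∩ (fun x => |Φ x|) ⁻¹' Set.Ici ε with hK
  have hzero : ∀ x, x ∉ K → D.indicator (fun x => ε * h (Φ x / ε)) x = 0 := by
    intro x hx
    by_cases hxD : x ∈ D
    · rw [Set.indicator_of_mem hxD, h0, mul_zero]
      have h3 : |Φ x| < ε := by
        by_contra hc
        exact hx ⟨subset_closure hxD, not_lt.1 hc⟩
      rw [abs_div, abs_of_pos hε, div_le_one hε]
      exact h3.le
    · rw [Set.indicator_of_notMem hxD]
  have hfd : ∀ x ∈ D, HasFDerivAt (D.indicator (fun x => ε * h (Φ x / ε)))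
      (deriv h (Φ x / ε) • fderiv ℝ Φ x) x := by
    intro x hx
    have h1 : HasFDerivAt (fun x => Φ x / ε) (ε⁻¹ • fderiv ℝ Φ x) x := by
      have := ((hΦd.differentiableAt (hD.mem_nhds hx)).hasFDerivAt).const_smul ε⁻¹
      refine this.congr_of_eventuallyEq (Filter.Eventually.of_forall fun z => ?_)
      simp [div_eq_inv_mul]
    have h2 := ((hd (Φ x / ε)).hasDerivAt.comp_hasFDerivAt x h1).const_smul ε
    have h3 : ε • deriv h (Φ x / ε) • ε⁻¹ • fderiv ℝ Φ x = deriv h (Φ x / ε) • fderiv ℝ Φ x := by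
      rw [smul_smul, smul_smul]; congr 1; field_simp
    rw [h3] at h2
    refine h2.congr_of_eventuallyEq ?_
    filter_upwards [hD.mem_nhds hx] with z hz
    rw [Set.indicator_of_mem hz]; rfl
  have hts : tsupport (D.indicator (fun x => ε * h (Φ x / ε))) ⊆ K := by
    refine closure_minimal (fun x hx => ?_) hcl
    by_contra hxK
    exact hx (hzero x hxK)
  refine ⟨D.indicator (fun x => ε * h (Φ x / ε)), K, hKc, hKD, hts, ?_, ?_, ?_⟩
  · intro x
    by_cases hx : x ∈ D
    · exact (hfd x hx).differentiableAt
    · have hxK : Kᶜ ∈ nhds x := hcl.isOpen_compl.mem_nhds fun h => hx (hKD h)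
      have : D.indicator (fun x => ε * h (Φ x / ε)) =ᶠ[nhds x] fun _ => 0 := by
        filter_upwards [hxK] with z hz using hzero z hz
      exact (differentiableAt_const (0 : ℝ)).congr_of_eventuallyEq this
  · intro x hx; rw [Set.indicator_of_mem hx]
  · intro x hx
    rw [aux_grad_def, (hfd x hx).fderiv, map_smul, aux_grad_def]

theorem aux_part1 {N : ℕ} {D : Set (EuclideanSpace ℝ (Fin N))} (hD : IsOpen D)
    (hDb : Bornology.IsBounded D)
    {w : EuclideanSpace ℝ (Fin N) → ℝ} (hw : ContinuousOn w D) (hw0 : ∀ x ∈ D, 0 < w x)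
    {Φ : EuclideanSpace ℝ (Fin N) → ℝ}
    (hΦc : ContinuousOn Φ (closure D)) (hΦd : DifferentiableOn ℝ Φ D)
    (hfr : ∀ x ∈ frontier D, Φ x = 0) (hne : ∀ x ∈ D, Φ x ≠ 0)
    (hΦ2 : IntegrableOn (fun x => Φ x ^ 2) D)
    (hΦg : IntegrableOn (fun x => ‖gradient Φ x‖ ^ 2 * w x) D)
    (δ : ℝ) (hδ : 0 < δ) :
    ∃ v : EuclideanSpace ℝ (Fin N) → ℝ, ContDiff ℝ (⊤ : ℕ∞) v ∧ HasCompactSupport v ∧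
      tsupport v ⊆ D ∧
      (∫ x in D, ‖gradient v x - gradient Φ x‖ ^ 2 * w x) + ∫ x in D, (v x - Φ x) ^ 2 < δ := by
  obtain ⟨h, C, hd, h0, h2, hle, hC⟩ := aux_trunc
  have hC0 : 0 ≤ C := (abs_nonneg _).trans (hC 0)
  have hpos : ∀ n : ℕ, (0 : ℝ) < 1 / ((n : ℝ) + 1) := fun n => by positivity
  have hz := tendsto_one_div_add_atTop_nhds_zero_nat (𝕜 := ℝ)
  choose u K hKc hKD huK hud hu hug using fun n : ℕ =>
    aux_trunc_fun hD hDb hΦc hΦd hfr hd h0 (hpos n)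
  have hΦL := aux_wmem hD hw hw0 Φ hΦg
  have hwm : AEStronglyMeasurable w (volume.restrict D) := hw.aestronglyMeasurable hD.measurableSet
  have hΦm : AEStronglyMeasurable Φ (volume.restrict D) :=
    (hΦc.mono subset_closure).aestronglyMeasurable hD.measurableSet
  have hPhiL : MemLp Φ 2 (volume.restrict D) := by
    rw [memLp_two_iff_integrable_sq hΦm]; exact hΦ2
  have hsmall : ∀ x ∈ D, ∀ᶠ n : ℕ in Filter.atTop, 2 < |Φ x / (1 / ((n : ℝ) + 1))| := by
    intro x hx
    have hp : 0 < |Φ x| / 2 := by have := abs_pos.2 (hne x hx); positivity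
    filter_upwards [hz.eventually (gt_mem_nhds hp)] with n hn
    rw [abs_div, abs_of_pos (hpos n), lt_div_iff₀ (hpos n)]
    linarith
  have T1 : Filter.Tendsto (fun n => ∫ x in D, ‖gradient (u n) x - gradient Φ x‖ ^ 2 * w x)
      Filter.atTop (nhds 0) := by
    have := tendsto_integral_of_dominated_convergence (μ := volume.restrict D)
      (F := fun n x => ‖gradient (u n) x - gradient Φ x‖ ^ 2 * w x) (f := fun _ => 0)
      (fun x => (C + 1) ^ 2 * (‖gradient Φ x‖ ^ 2 * w x))
      (fun n => (((aux_grad_meas (u n)).sub (aux_grad_meas Φ)).norm.pow 2).aestronglyMeasurable.mul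
        hwm) (hΦg.const_mul _) ?_ ?_
    · simpa using this
    · intro n
      refine (ae_restrict_iff' hD.measurableSet).2 (Filter.Eventually.of_forall fun x hx => ?_)
      have hwx := hw0 x hx
      rw [Real.norm_of_nonneg (by positivity), hug n x hx, ← mul_assoc, ← mul_pow]
      refine mul_le_mul_of_nonneg_right (pow_le_pow_left₀ (norm_nonneg _) ?_ 2) hwx.le
      refine (norm_sub_le _ _).trans ?_
      rw [norm_smul, Real.norm_eq_abs, add_mul, one_mul]
      gcongr
      exact hC _
    · refine (ae_restrict_iff' hD.measurableSet).2 (Filter.Eventually.of_forall fun x hx => ?_)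
      refine tendsto_const_nhds.congr' ?_
      filter_upwards [hsmall x hx] with n hn
      have hev : h =ᶠ[nhds (Φ x / (1 / ((n : ℝ) + 1)))] fun t => t := by
        filter_upwards [continuous_abs.continuousAt.eventually (lt_mem_nhds hn)] with s hs
          using h2 s hs.le
      rw [hug n x hx, hev.deriv_eq]
      simp
  have T2 : Filter.Tendsto (fun n => ∫ x in D, (u n x - Φ x) ^ 2) Filter.atTop (nhds 0) := by
    have := tendsto_integral_of_dominated_convergence (μ := volume.restrict D)
      (F := fun n x => (u n x - Φ x) ^ 2) (f := fun _ => 0)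
      (fun x => 4 * Φ x ^ 2)
      (fun n => ((hud n).continuous.aestronglyMeasurable.sub hΦm).pow 2) (hΦ2.const_mul _) ?_ ?_
    · simpa using this
    · intro n
      refine (ae_restrict_iff' hD.measurableSet).2 (Filter.Eventually.of_forall fun x hx => ?_)
      rw [Real.norm_of_nonneg (by positivity), hu n x hx]
      have h3 : |1 / ((n : ℝ) + 1) * h (Φ x / (1 / ((n : ℝ) + 1)))| ≤ |Φ x| := by
        rw [abs_mul, abs_of_pos (hpos n)]
        calc 1 / ((n : ℝ) + 1) * |h (Φ x / (1 / ((n : ℝ) + 1)))|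
            ≤ 1 / ((n : ℝ) + 1) * |Φ x / (1 / ((n : ℝ) + 1))| :=
              mul_le_mul_of_nonneg_left (hle _) (hpos n).le
          _ = |Φ x| := by
              rw [abs_div, abs_of_pos (hpos n), mul_div_cancel₀ _ (hpos n).ne']
      have h4 := (abs_sub (1 / ((n : ℝ) + 1) * h (Φ x / (1 / ((n : ℝ) + 1)))) (Φ x)).trans
        (add_le_add_left h3 _)
      rw [← sq_abs]
      calc _ ≤ (|Φ x| + |Φ x|) ^ 2 := pow_le_pow_left₀ (abs_nonneg _) h4 2
        _ = 4 * Φ x ^ 2 := by rw [← sq_abs (Φ x)]; ring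
    · refine (ae_restrict_iff' hD.measurableSet).2 (Filter.Eventually.of_forall fun x hx => ?_)
      refine tendsto_const_nhds.congr' ?_
      filter_upwards [hsmall x hx] with n hn
      rw [hu n x hx, h2 _ hn.le, mul_div_cancel₀ _ (hpos n).ne']
      simp
  have hδ8 : 0 < δ / 8 := by positivity
  obtain ⟨n, hn1, hn2⟩ := ((T1.eventually (gt_mem_nhds hδ8)).and
    (T2.eventually (gt_mem_nhds hδ8))).exists
  have huc : HasCompactSupport (u n) := (hKc n).of_isClosed_subset (isClosed_tsupport _) (huK n)
  have hgu : MemLp (gradient (u n)) 2 volume := by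
    refine aux_gradL2 hw hw0 hΦL (hKc n) (hKD n) (u n) (huK n) 0 C fun x hx => ?_
    rw [hug n x (hKD n hx), norm_smul, zero_add]
    exact mul_le_mul_of_nonneg_right (hC _) (norm_nonneg _)
  obtain ⟨v, hvs, hvc, hvD, hv1, hv2⟩ := aux_approx D hD w hw hw0 (u n) (hud n) huc
    ((huK n).trans (hKD n)) hgu (δ / 8) hδ8
  have hgv : MemLp (gradient v) 2 volume :=
    (aux_grad_smooth hvs hvc).1.memLp_of_hasCompactSupport (aux_grad_smooth hvs hvc).2
  have hwgu := aux_wL2 hD hw hgu (hKc n) (hKD n) fun x hx => aux_grad_zero fun h => hx (huK n h)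
  have hwgv := aux_wL2 hD hw hgv hvc.isCompact hvD fun x hx => aux_grad_zero hx
  have huL : MemLp (u n) 2 (volume.restrict D) :=
    ((hud n).continuous.memLp_of_hasCompactSupport huc).restrict D
  have hvL : MemLp v 2 (volume.restrict D) :=
    (hvs.continuous.memLp_of_hasCompactSupport hvc).restrict D
  have hpar : ∀ {H : Type} [NormedAddCommGroup H]
      {a b c : EuclideanSpace ℝ (Fin N) → H}, MemLp a 2 (volume.restrict D) →
      MemLp b 2 (volume.restrict D) → MemLp c 2 (volume.restrict D) →
      ∫ x in D, ‖a x - c x‖ ^ 2 ≤ 2 * (∫ x in D, ‖a x - b x‖ ^ 2)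
        + 2 * ∫ x in D, ‖b x - c x‖ ^ 2 := by
    intro H _ a b c ha hb hc
    have i1 : Integrable (fun x => ‖a x - b x‖ ^ 2) (volume.restrict D) :=
      (ha.sub hb).integrable_norm_pow (by norm_num)
    have i2 : Integrable (fun x => ‖b x - c x‖ ^ 2) (volume.restrict D) :=
      (hb.sub hc).integrable_norm_pow (by norm_num)
    rw [← integral_const_mul, ← integral_const_mul, ← integral_add (i1.const_mul 2) (i2.const_mul 2)]
    refine integral_mono_of_nonneg (Filter.Eventually.of_forall fun x => by
      simp only [Pi.zero_apply]; positivity) ((i1.const_mul 2).add (i2.const_mul 2))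
      (Filter.Eventually.of_forall fun x => ?_)
    simp only
    have h5 := norm_sub_le_norm_sub_add_norm_sub (a x) (b x) (c x)
    nlinarith [norm_nonneg (a x - c x), sq_nonneg (‖a x - b x‖ - ‖b x - c x‖),
      pow_le_pow_left₀ (norm_nonneg _) h5 2]
  refine ⟨v, hvs, hvc, hvD, ?_⟩
  have p1 := hpar hwgv hwgu hΦL
  have p2 := hpar hvL huL hPhiL
  simp_rw [← smul_sub] at p1
  rw [aux_sq hD hw0 (fun x => gradient v x - gradient Φ x),
    aux_sq hD hw0 (fun x => gradient v x - gradient (u n) x),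
    aux_sq hD hw0 (fun x => gradient (u n) x - gradient Φ x)] at p1
  simp only [Real.norm_eq_abs, sq_abs] at p2
  linarith

theorem aux_picone {N : ℕ} {Ω D : Set (EuclideanSpace ℝ (Fin N))} (hΩ : IsOpen Ω)
    (hD : IsOpen D) (hDΩ : D ⊆ Ω)
    {w : EuclideanSpace ℝ (Fin N) → ℝ} (hw : ContinuousOn w Ω) (hw0 : ∀ x ∈ Ω, 0 < w x)
    {Φ : EuclideanSpace ℝ (Fin N) → ℝ} {l : ℝ} (heig : IsWeakEigenfun Ω w Φ l)
    (hne : ∀ x ∈ D, Φ x ≠ 0)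
    (g : EuclideanSpace ℝ (Fin N) → ℝ) (hg : ContDiff ℝ (⊤ : ℕ∞) g) (hgc : HasCompactSupport g)
    (hgD : tsupport g ⊆ D) :
    l * ∫ x in D, g x ^ 2 ≤ ∫ x in D, ‖gradient g x‖ ^ 2 * w x := by
  have hΦd : DifferentiableOn ℝ Φ D := heig.1.2.2.1.mono hDΩ
  have hΦg : IntegrableOn (fun x => ‖gradient Φ x‖ ^ 2 * w x) D :=
    heig.1.2.2.2.2.mono_set hDΩ
  have hwD := hw.mono hDΩ
  have hw0D : ∀ x ∈ D, 0 < w x := fun x hx => hw0 x (hDΩ hx)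
  have hΦL := aux_wmem hD hwD hw0D Φ hΦg
  have hgd : Differentiable ℝ g := hg.differentiable (by simp)
  have hfd : ∀ x ∈ D, HasFDerivAt (fun x => g x ^ 2 / Φ x)
      ((2 * g x / Φ x) • fderiv ℝ g x - (g x / Φ x) ^ 2 • fderiv ℝ Φ x) x := by
    intro x hx
    have h1 := (hΦd.differentiableAt (hD.mem_nhds hx)).hasFDerivAt
    have h2 : HasFDerivAt (fun x => (Φ x)⁻¹) (-(Φ x ^ 2)⁻¹ • fderiv ℝ Φ x) x :=
      (hasDerivAt_inv (hne x hx)).comp_hasFDerivAt x h1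
    have h3 := ((hgd x).hasFDerivAt.pow 2).mul h2
    refine (h3.congr_fderiv ?_).congr_of_eventuallyEq
      (Filter.Eventually.of_forall fun z => ?_)
    · ext e
      have := hne x hx
      simp
      field_simp
      ring
    · simp [div_eq_mul_inv]
  have hgrad : ∀ x ∈ D, gradient (fun x => g x ^ 2 / Φ x) x
      = (2 * g x / Φ x) • gradient g x - (g x / Φ x) ^ 2 • gradient Φ x := by
    intro x hx
    rw [aux_grad_def, (hfd x hx).fderiv, map_sub, map_smul, map_smul, aux_grad_def, aux_grad_def]
  have hts : tsupport (fun x => g x ^ 2 / Φ x) ⊆ tsupport g := by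
    refine closure_mono fun x hx hgx => hx ?_
    simp [hgx]
  have hdiff : Differentiable ℝ (fun x => g x ^ 2 / Φ x) := by
    intro x
    by_cases hx : x ∈ D
    · exact (hfd x hx).differentiableAt
    · have hxK : (tsupport g)ᶜ ∈ nhds x :=
        (isClosed_tsupport g).isOpen_compl.mem_nhds fun h => hx (hgD h)
      have : (fun x => g x ^ 2 / Φ x) =ᶠ[nhds x] fun _ => 0 := by
        filter_upwards [hxK] with z hz
        rw [image_eq_zero_of_notMem_tsupport hz]; simp
      exact (differentiableAt_const (0 : ℝ)).congr_of_eventuallyEq this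
  have hΦK : ContinuousOn Φ (tsupport g) := hΦd.continuousOn.mono hgD
  have hK0 : ∀ x ∈ tsupport g, Φ x ≠ 0 := fun x hx => hne x (hgD hx)
  obtain ⟨A, hA⟩ := hgc.isCompact.exists_bound_of_continuousOn
    (f := fun x => (2 * g x / Φ x) • gradient g x)
    (((continuousOn_const.mul hg.continuous.continuousOn).div hΦK hK0).smul
      (aux_grad_smooth hg hgc).1.continuousOn)
  obtain ⟨B, hB⟩ := hgc.isCompact.exists_bound_of_continuousOn
    (f := fun x => (g x / Φ x) ^ 2) ((hg.continuous.continuousOn.div hΦK hK0).pow 2)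
  have hgL : MemLp (gradient (fun x => g x ^ 2 / Φ x)) 2 volume := by
    refine aux_gradL2 hwD hw0D hΦL hgc.isCompact hgD _ hts A B fun x hx => ?_
    rw [hgrad x (hgD hx)]
    refine (norm_sub_le _ _).trans (add_le_add (hA x hx) ?_)
    rw [norm_smul]
    exact mul_le_mul_of_nonneg_right (hB x hx) (norm_nonneg _)
  have hW := aux_weak hΩ hw hw0 heig _ hdiff
    (hgc.isCompact.of_isClosed_subset (isClosed_tsupport _) hts) (hts.trans (hgD.trans hDΩ)) hgL
  have e1 : ∫ x in Ω, ⟪gradient Φ x, gradient (fun x => g x ^ 2 / Φ x) x⟫ * w x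
      = ∫ x in D, ⟪gradient Φ x, gradient (fun x => g x ^ 2 / Φ x) x⟫ * w x := by
    refine setIntegral_eq_of_subset_of_forall_sdiff_eq_zero hΩ.measurableSet hDΩ fun x hx => ?_
    rw [aux_grad_zero fun h => hx.2 (hgD (hts h))]; simp
  have e2 : ∫ x in Ω, Φ x * (g x ^ 2 / Φ x) = ∫ x in D, g x ^ 2 := by
    have e3 : ∫ x in Ω, Φ x * (g x ^ 2 / Φ x) = ∫ x in D, Φ x * (g x ^ 2 / Φ x) := by
      refine setIntegral_eq_of_subset_of_forall_sdiff_eq_zero hΩ.measurableSet hDΩ fun x hx => ?_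
      rw [image_eq_zero_of_notMem_tsupport fun h => hx.2 (hgD h)]; simp
    rw [e3]
    refine setIntegral_congr_fun hD.measurableSet fun x hx => ?_
    exact mul_div_cancel₀ _ (hne x hx)
  rw [e1, e2] at hW
  rw [← hW]
  have hnn : 0 ≤ ∫ x in D, ‖gradient g x‖ ^ 2 * w x :=
    setIntegral_nonneg hD.measurableSet fun x hx => by have := hw0D x hx; positivity
  by_cases hi : Integrable (fun x => ⟪gradient Φ x, gradient (fun x => g x ^ 2 / Φ x) x⟫ * w x)
      (volume.restrict D)
  · have hgi : IntegrableOn (fun x => ‖gradient g x‖ ^ 2 * w x) D := by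
      have hgg := aux_grad_smooth hg hgc
      have := (aux_wL2 hD hwD (hgg.1.memLp_of_hasCompactSupport hgg.2) hgc.isCompact hgD
        fun x hx => aux_grad_zero hx).integrable_norm_pow (by norm_num)
      refine IntegrableOn.congr_fun this (fun x hx => ?_) hD.measurableSet
      simp [norm_smul, mul_pow, Real.sq_sqrt (hw0D x hx).le, mul_comm]
    refine setIntegral_mono_on hi hgi hD.measurableSet fun x hx => ?_
    refine mul_le_mul_of_nonneg_right ?_ (hw0D x hx).le
    rw [hgrad x hx, inner_sub_right, real_inner_smul_right, real_inner_smul_right,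
      real_inner_self_eq_norm_sq]
    have h5 := norm_sub_sq_real (gradient g x) ((g x / Φ x) • gradient Φ x)
    rw [real_inner_smul_right, norm_smul, mul_pow, Real.norm_eq_abs, sq_abs,
      real_inner_comm] at h5
    have h6 : 2 * g x / Φ x = 2 * (g x / Φ x) := by ring
    rw [h6]
    nlinarith [sq_nonneg ‖gradient g x - (g x / Φ x) • gradient Φ x‖]
  · rw [integral_undef hi]; exact hnn

theorem aux_main {N : ℕ} {Ω D : Set (EuclideanSpace ℝ (Fin N))} (hΩ : IsOpen Ω)
    (hD : IsOpen D) (hDΩ : D ⊆ Ω) (hDb : Bornology.IsBounded D) (hDn : D.Nonempty)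
    {w : EuclideanSpace ℝ (Fin N) → ℝ} (hw : ContinuousOn w Ω) (hw0 : ∀ x ∈ Ω, 0 < w x)
    {Φ : EuclideanSpace ℝ (Fin N) → ℝ} {l : ℝ} (heig : IsWeakEigenfun Ω w Φ l)
    (hfr : ∀ x ∈ frontier D, Φ x = 0)
    (hne : ∀ x ∈ D, Φ x ≠ 0) :
    (∃ v : ℕ → EuclideanSpace ℝ (Fin N) → ℝ,
      (∀ n, ContDiff ℝ (⊤ : ℕ∞) (v n) ∧ HasCompactSupport (v n) ∧ tsupport (v n) ⊆ D) ∧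
      Filter.Tendsto (fun n =>
          (∫ x in D, ‖gradient (v n) x - gradient Φ x‖ ^ 2 * w x) +
          ∫ x in D, (v n x - Φ x) ^ 2)
        Filter.atTop (nhds 0)) ∧
    l = dirEigen D w 1 := by
  have hΦd : DifferentiableOn ℝ Φ D := heig.1.2.2.1.mono hDΩ
  have hΦc : ContinuousOn Φ (closure D) := heig.1.1.mono (closure_mono hDΩ)
  have hΦ2 : IntegrableOn (fun x => Φ x ^ 2) D := heig.1.2.2.2.1.mono_set hDΩ
  have hΦg : IntegrableOn (fun x => ‖gradient Φ x‖ ^ 2 * w x) D :=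
    heig.1.2.2.2.2.mono_set hDΩ
  have hwD := hw.mono hDΩ
  have hw0D : ∀ x ∈ D, 0 < w x := fun x hx => hw0 x (hDΩ hx)
  have hΦL := aux_wmem hD hwD hw0D Φ hΦg
  have hΦm : AEStronglyMeasurable Φ (volume.restrict D) :=
    (hΦc.mono subset_closure).aestronglyMeasurable hD.measurableSet
  have hPhiL : MemLp Φ 2 (volume.restrict D) := by
    rw [memLp_two_iff_integrable_sq hΦm]; exact hΦ2
  have hpos : ∀ n : ℕ, (0 : ℝ) < 1 / ((n : ℝ) + 1) := fun n => by positivity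
  have hz := tendsto_one_div_add_atTop_nhds_zero_nat (𝕜 := ℝ)
  choose v hvs hvc hvD hv using fun n : ℕ =>
    aux_part1 hD hDb hwD hw0D hΦc hΦd hfr hne hΦ2 hΦg (1 / ((n : ℝ) + 1)) (hpos n)
  have n1 : ∀ n, 0 ≤ ∫ x in D, ‖gradient (v n) x - gradient Φ x‖ ^ 2 * w x := fun n =>
    setIntegral_nonneg hD.measurableSet fun x hx => by have := hw0D x hx; positivity
  have n2 : ∀ n, 0 ≤ ∫ x in D, (v n x - Φ x) ^ 2 := fun n =>
    integral_nonneg fun x => by positivity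
  refine ⟨⟨v, fun n => ⟨hvs n, hvc n, hvD n⟩,
    squeeze_zero (fun n => add_nonneg (n1 n) (n2 n)) (fun n => (hv n).le) hz⟩, ?_⟩
  have hgv : ∀ n, MemLp (gradient (v n)) 2 volume := fun n =>
    (aux_grad_smooth (hvs n) (hvc n)).1.memLp_of_hasCompactSupport (aux_grad_smooth (hvs n) (hvc n)).2
  have hvL : ∀ n, MemLp (v n) 2 volume := fun n =>
    (hvs n).continuous.memLp_of_hasCompactSupport (hvc n)
  obtain ⟨T1, T1'⟩ := aux_L2 (μ := volume.restrict D)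
    (F := fun n x => Real.sqrt (w x) • gradient (v n) x)
    (f := fun x => Real.sqrt (w x) • gradient Φ x)
    (G := fun x => Real.sqrt (w x) • gradient Φ x)
    (fun n => aux_wL2 hD hwD (hgv n) (hvc n).isCompact (hvD n) fun x hx => aux_grad_zero hx)
    hΦL hΦL (by
      simp_rw [← smul_sub]
      refine squeeze_zero (fun n => integral_nonneg fun x => by positivity) (fun n => ?_) hz
      rw [aux_sq hD hw0D (fun x => gradient (v n) x - gradient Φ x)]
      linarith [hv n, n2 n])
  obtain ⟨T2, T2'⟩ := aux_L2 (μ := volume.restrict D) (F := v) (f := Φ) (G := Φ)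
    (fun n => (hvL n).restrict D) hPhiL hPhiL (by
      refine squeeze_zero (fun n => integral_nonneg fun x => by positivity) (fun n => ?_) hz
      simp only [Real.norm_eq_abs, sq_abs]
      linarith [hv n, n1 n])
  simp_rw [aux_in hD hw0D, real_inner_self_eq_norm_sq] at T1
  simp_rw [aux_sq hD hw0D] at T1'
  have hR : ∀ f : EuclideanSpace ℝ (Fin N) → ℝ, ∫ x in D, ⟪Φ x, f x⟫ = ∫ x in D, Φ x * f x := by
    intro f
    refine integral_congr_ae (Filter.Eventually.of_forall fun x => ?_)
    simp [mul_comm]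
  simp_rw [hR, ← sq] at T2
  simp only [Real.norm_eq_abs, sq_abs] at T2'
  have hE : ∫ x in D, ‖gradient Φ x‖ ^ 2 * w x = l * ∫ x in D, Φ x ^ 2 := by
    refine tendsto_nhds_unique T1 ((T2.const_mul l).congr fun n => ?_)
    have := heig.2 (v n) (hvs n) (hvc n) ((hvD n).trans hDΩ)
    rw [setIntegral_eq_of_subset_of_forall_sdiff_eq_zero hΩ.measurableSet hDΩ fun x hx => by
        rw [aux_grad_zero fun h => hx.2 (hvD n h)]; simp,
      setIntegral_eq_of_subset_of_forall_sdiff_eq_zero hΩ.measurableSet hDΩ fun x hx => by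
        rw [image_eq_zero_of_notMem_tsupport fun h => hx.2 (hvD n h)]; simp] at this
    exact this.symm
  have hI : 0 < ∫ x in D, Φ x ^ 2 := by
    rw [setIntegral_pos_iff_support_of_nonneg_ae
      (Filter.Eventually.of_forall fun x => by simp only [Pi.zero_apply]; positivity) hΦ2]
    have : Function.support (fun x => Φ x ^ 2) ∩ D = D :=
      Set.inter_eq_right.2 fun x hx => pow_ne_zero 2 (hne x hx)
    rw [this]
    exact hD.measure_pos volume hDn
  have hmem : ∀ r, l < r → r ∈ { r : ℝ | ∃ g : Fin 1 → EuclideanSpace ℝ (Fin N) → ℝ,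
    (∀ j, ContDiff ℝ (⊤ : ℕ∞) (g j) ∧ HasCompactSupport (g j) ∧ tsupport (g j) ⊆ D) ∧
    ∀ c : Fin 1 → ℝ, c ≠ 0 →
      0 < ∫ x in D, (∑ j, c j * g j x) ^ 2 ∧
      ∫ x in D, ‖gradient (fun y => ∑ j, c j * g j y) x‖ ^ 2 * w x ≤
        r * ∫ x in D, (∑ j, c j * g j x) ^ 2 } := by
    intro r hr
    have T3 := T1'.sub (T2'.const_mul r)
    have hneg : (∫ x in D, ‖gradient Φ x‖ ^ 2 * w x) - r * ∫ x in D, Φ x ^ 2 < 0 := by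
      rw [hE]; nlinarith
    obtain ⟨n, hn1, hn2⟩ := ((T3.eventually (gt_mem_nhds hneg)).and
      (T2'.eventually (lt_mem_nhds hI))).exists
    refine ⟨fun _ => v n, fun _ => ⟨hvs n, hvc n, hvD n⟩, fun c hc => ?_⟩
    have hc0 : c 0 ≠ 0 := fun h => hc (by ext i; rw [Subsingleton.elim i 0, h]; rfl)
    have hc2 : 0 < c 0 ^ 2 := by positivity
    have hgr : ∀ x, gradient (fun y => c 0 * v n y) x = c 0 • gradient (v n) x := by
      intro x
      rw [aux_grad_def, aux_grad_def, fderiv_const_mul ((hvs n).differentiable (by simp) x),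
        map_smul]
    simp only [Fin.sum_univ_one, hgr, norm_smul, mul_pow, Real.norm_eq_abs, sq_abs, mul_assoc]
    rw [integral_const_mul, integral_const_mul]
    refine ⟨mul_pos hc2 hn2, ?_⟩
    nlinarith
  have hlb : ∀ r ∈ { r : ℝ | ∃ g : Fin 1 → EuclideanSpace ℝ (Fin N) → ℝ,
    (∀ j, ContDiff ℝ (⊤ : ℕ∞) (g j) ∧ HasCompactSupport (g j) ∧ tsupport (g j) ⊆ D) ∧
    ∀ c : Fin 1 → ℝ, c ≠ 0 →
      0 < ∫ x in D, (∑ j, c j * g j x) ^ 2 ∧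
      ∫ x in D, ‖gradient (fun y => ∑ j, c j * g j y) x‖ ^ 2 * w x ≤
        r * ∫ x in D, (∑ j, c j * g j x) ^ 2 }, l ≤ r := by
    rintro r ⟨g, hg, hr⟩
    obtain ⟨h1, h2⟩ := hr (fun _ => 1) (fun h => one_ne_zero (congrFun h 0))
    simp only [Fin.sum_univ_one, one_mul] at h1 h2
    have h3 := aux_picone hΩ hD hDΩ hw hw0 heig hne (g 0) (hg 0).1 (hg 0).2.1 (hg 0).2.2
    have h4 := h3.trans h2
    exact le_of_mul_le_mul_right h4 h1
  unfold dirEigen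
  refine le_antisymm (le_csInf ⟨l + 1, hmem _ (by linarith)⟩ hlb) ?_
  exact le_of_forall_gt_imp_ge_of_dense fun r hr => csInf_le ⟨l, hlb⟩ (hmem r hr)

/-- **Nodal domains and the first eigenvalue** (Lemma 3.4): let `Φ` be a weak
Dirichlet eigenfunction of `-div(w∇·)` on `Ω` with eigenvalue `l`, and let
`Ωⱼ = connectedComponentIn {Φ ≠ 0} y` be a nodal domain of `Φ`.  Then the
restriction of `Φ` to `Ωⱼ` (extended by zero) belongs to `H₀¹(Ωⱼ;w)` — i.e. it
is approximated in the weighted energy norm and in `L²` by test functions on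
`Ωⱼ` — and `l = λ₁(Ωⱼ)`, the first Dirichlet eigenvalue of `-div(w∇·)` on `Ωⱼ`. -/
theorem stmt_11 (N : ℕ) (Ω : Set (EuclideanSpace ℝ (Fin N)))
    (hΩopen : IsOpen Ω) (hΩbd : Bornology.IsBounded Ω) (hΩconn : IsConnected Ω)
    (w : EuclideanSpace ℝ (Fin N) → ℝ)
    (hw_cont : ContinuousOn w (closure Ω)) (hw_smooth : ContDiffOn ℝ (⊤ : ℕ∞) w Ω)
    (hw_pos : ∀ x ∈ Ω, 0 < w x)
    (Φ : EuclideanSpace ℝ (Fin N) → ℝ) (l : ℝ)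
    (heig : IsWeakEigenfun Ω w Φ l)
    (y : EuclideanSpace ℝ (Fin N)) (hy : y ∈ Ω) (hΦy : Φ y ≠ 0) :
    (∃ v : ℕ → EuclideanSpace ℝ (Fin N) → ℝ,
      (∀ n, ContDiff ℝ (⊤ : ℕ∞) (v n) ∧ HasCompactSupport (v n) ∧
        tsupport (v n) ⊆ connectedComponentIn {x ∈ Ω | Φ x ≠ 0} y) ∧
      Filter.Tendsto (fun n =>
          (∫ x in connectedComponentIn {x ∈ Ω | Φ x ≠ 0} y,
            ‖gradient (v n) x - gradient Φ x‖ ^ 2 * w x) +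
          ∫ x in connectedComponentIn {x ∈ Ω | Φ x ≠ 0} y, (v n x - Φ x) ^ 2)
        Filter.atTop (nhds 0)) ∧
    l = dirEigen (connectedComponentIn {x ∈ Ω | Φ x ≠ 0} y) w 1 := by
  have hΦc : ContinuousOn Φ Ω := heig.1.1.mono subset_closure
  have hSopen : IsOpen {x ∈ Ω | Φ x ≠ 0} :=
    hΦc.isOpen_inter_preimage hΩopen isOpen_compl_singleton
  have hDS : connectedComponentIn {x ∈ Ω | Φ x ≠ 0} y ⊆ {x ∈ Ω | Φ x ≠ 0} :=
    connectedComponentIn_subset _ _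
  have hDΩ : connectedComponentIn {x ∈ Ω | Φ x ≠ 0} y ⊆ Ω := fun x hx => (hDS hx).1
  have hDopen : IsOpen (connectedComponentIn {x ∈ Ω | Φ x ≠ 0} y) := hSopen.connectedComponentIn
  refine aux_main hΩopen hDopen hDΩ (hΩbd.subset hDΩ)
    ⟨y, mem_connectedComponentIn ⟨hy, hΦy⟩⟩ (hw_cont.mono subset_closure) hw_pos heig ?_
    fun x hx => (hDS hx).2
  intro x hx
  by_contra hne
  rw [hDopen.frontier_eq] at hx
  have hxΩ : x ∈ Ω := by
    by_contra hxΩ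
    refine hne (heig.1.2.1 x ?_)
    rw [hΩopen.frontier_eq]
    exact ⟨closure_mono hDΩ hx.1, hxΩ⟩
  have hxS : x ∈ {x ∈ Ω | Φ x ≠ 0} := ⟨hxΩ, hne⟩
  have hxo : IsOpen (connectedComponentIn {x ∈ Ω | Φ x ≠ 0} x) := hSopen.connectedComponentIn
  obtain ⟨z, hz1, hz2⟩ := mem_closure_iff.1 hx.1 _ hxo (mem_connectedComponentIn hxS)
  have h1 := connectedComponentIn_eq hz1
  have h2 := connectedComponentIn_eq hz2
  refine hx.2 ?_
  rw [h2, ← h1]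
  exact mem_connectedComponentIn hxS
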